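/- Let f : E → ℝ be twice continuously differentiable and ℤⁿ-periodic, and let A : E → ℝ be continuous with A x > 0 for all x. If Δ f x = A x * f x for all x ∈ E, then f is identically zero. -/

import Mathlib

/-- The Laplacian of `f` at `x`: the sum of the pure second directional derivatives of `f`
at `x` along the standard orthonormal basis directions of `EuclideanSpace ℝ (Fin n)`. -/
noncomputable def laplacian {n : ℕ} (f : EuclideanSpace ℝ (Fin n) → ℝ)
    (x : EuclideanSpace ℝ (Fin n)) : ℝ :=
  ∑ i : Fin n, (iteratedFDeriv ℝ 2 f x)
    ![EuclideanSpace.single i (1 : ℝ), EuclideanSpace.single i (1 : ℝ)]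

/-!
At a maximum of `f` all pure second directional derivatives are nonpositive, so `A f = Δ f ≤ 0`
there, which forces `max f ≤ 0`. Periodicity along a spanning set of directions is what makes the
maximum exist. Applying the same to `-f` gives `f = 0`.
-/

open Filter Topology
open scoped Laplacian

section SecondDerivativeTest

theorem deriv_deriv_nonpos_of_isLocalMax {g : ℝ → ℝ} {t : ℝ} (hc : ContinuousAt g t)
    (h : IsLocalMax g t) : deriv (deriv g) t ≤ 0 := by
  by_contra! hpos
  -- Otherwise `t` is also a local minimum, so `g` is locally constant.
  have hmin : IsLocalMin g t := isLocalMin_of_deriv_deriv_pos hpos h.deriv_eq_zero hc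
  have hconst : g =ᶠ[𝓝 t] fun _ ↦ g t := by
    filter_upwards [h, hmin] with s hle hge using le_antisymm hle hge
  have hzero : deriv (deriv g) t = 0 := by simpa using hconst.deriv.deriv_eq
  exact hpos.ne' hzero

theorem deriv_deriv_comp_add_smul {𝕜 E F : Type*} [NontriviallyNormedField 𝕜]
    [NormedAddCommGroup E] [NormedSpace 𝕜 E] [NormedAddCommGroup F] [NormedSpace 𝕜 F]
    {f : E → F} {x : E} (hf : ContDiffAt 𝕜 2 f x) (v : E) :
    deriv (deriv fun t : 𝕜 ↦ f (x + t • v)) 0 = iteratedFDeriv 𝕜 2 f x ![v, v] := by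
  have hline (t : 𝕜) : HasDerivAt (fun s : 𝕜 ↦ x + s • v) v t := by
    simpa using ((hasDerivAt_id t).smul_const v).const_add x
  have hline_zero : Tendsto (fun s : 𝕜 ↦ x + s • v) (𝓝 0) (𝓝 x) := by
    simpa using (hline 0).continuousAt.tendsto
  have hderiv : deriv (fun t : 𝕜 ↦ f (x + t • v)) =ᶠ[𝓝 0] fun t ↦ fderiv 𝕜 f (x + t • v) v := by
    filter_upwards [hline_zero.eventually (hf.eventually (by simp))] with t ht
    exact ((ht.differentiableAt two_ne_zero).hasFDerivAt.comp_hasDerivAt t (hline t)).deriv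
  have hfderiv : HasFDerivAt (fderiv 𝕜 f) (fderiv 𝕜 (fderiv 𝕜 f) x) x :=
    ((hf.fderiv_right (m := 1) (by norm_num)).differentiableAt one_ne_zero).hasFDerivAt
  have hfderiv_line : HasDerivAt (fun t : 𝕜 ↦ fderiv 𝕜 f (x + t • v))
      (fderiv 𝕜 (fderiv 𝕜 f) x v) 0 :=
    hfderiv.comp_hasDerivAt_of_eq 0 (hline 0) (by simp)
  calc deriv (deriv fun t : 𝕜 ↦ f (x + t • v)) 0
      = deriv (fun t : 𝕜 ↦ fderiv 𝕜 f (x + t • v) v) 0 := hderiv.deriv_eq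
    _ = fderiv 𝕜 (fderiv 𝕜 f) x v v := by
      simpa using (hfderiv_line.clm_apply (hasDerivAt_const 0 v)).deriv
    _ = iteratedFDeriv 𝕜 2 f x ![v, v] := by simp [iteratedFDeriv_two_apply]

theorem iteratedFDeriv_two_nonpos_of_isLocalMax {E : Type*} [NormedAddCommGroup E]
    [NormedSpace ℝ E] {f : E → ℝ} {x : E} (hf : ContDiffAt ℝ 2 f x) (hx : IsLocalMax f x) (v : E) :
    iteratedFDeriv ℝ 2 f x ![v, v] ≤ 0 := by
  have hline : ContinuousAt (fun t : ℝ ↦ x + t • v) 0 := by fun_prop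
  rw [← deriv_deriv_comp_add_smul hf]
  refine deriv_deriv_nonpos_of_isLocalMax ?_ ?_
  · exact ContinuousAt.comp (by simpa using hf.continuousAt) hline
  · have hmax : IsLocalMax f (x + (0 : ℝ) • v) := by simpa using hx
    exact hmax.comp_continuous (b := 0) hline

theorem laplacian_nonpos_of_isLocalMax {E : Type*} [NormedAddCommGroup E]
    [InnerProductSpace ℝ E] [FiniteDimensional ℝ E] {f : E → ℝ} {x : E}
    (hf : ContDiffAt ℝ 2 f x) (hx : IsLocalMax f x) : Δ f x ≤ 0 := by
  rw [InnerProductSpace.laplacian_eq_iteratedFDeriv_stdOrthonormalBasis]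
  exact Finset.sum_nonpos fun i _ ↦ iteratedFDeriv_two_nonpos_of_isLocalMax hf hx _

end SecondDerivativeTest

section Periodic

theorem periodic_of_mem_span_int {E α : Type*} [AddCommGroup E] {f : E → α} {s : Set E}
    (hper : ∀ v ∈ s, Function.Periodic f v) {w : E} (hw : w ∈ Submodule.span ℤ s) :
    Function.Periodic f w := by
  induction hw using Submodule.span_induction with
  | mem v hv => exact hper v hv
  | zero => exact fun x ↦ by rw [add_zero]
  | add v w _ _ hv hw => exact hv.add_period hw
  | smul k v _ hv => exact hv.zsmul k

variable {E : Type*} [NormedAddCommGroup E] [NormedSpace ℝ E] [FiniteDimensional ℝ E] {s : Set E}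

theorem isCompact_range_of_periodic_of_span_eq_top {α : Type*} [TopologicalSpace α] {f : E → α}
    (hf : Continuous f) (hs : Submodule.span ℝ s = ⊤) (hper : ∀ v ∈ s, Function.Periodic f v) :
    IsCompact (Set.range f) := by
  let b := Module.Basis.ofSpan hs.ge
  have : Finite _ := Module.Finite.finite_basis b
  have hb : ∀ v ∈ Set.range b, Function.Periodic f v :=
    fun v hv ↦ hper v (Module.Basis.ofSpan_subset hs.ge hv)
  exact IsZLattice.isCompact_range_of_periodic (Submodule.span ℤ (Set.range b)) f hf
    fun x _ hw ↦ periodic_of_mem_span_int hb hw x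

theorem exists_forall_le_of_periodic_of_span_eq_top {α : Type*} [LinearOrder α]
    [TopologicalSpace α] [ClosedIciTopology α] {f : E → α} (hf : Continuous f)
    (hs : Submodule.span ℝ s = ⊤) (hper : ∀ v ∈ s, Function.Periodic f v) :
    ∃ x, ∀ y, f y ≤ f x := by
  obtain ⟨_, ⟨x, rfl⟩, hx⟩ :=
    (isCompact_range_of_periodic_of_span_eq_top hf hs hper).exists_isGreatest
      (Set.range_nonempty f)
  exact ⟨x, fun y ↦ hx ⟨y, rfl⟩⟩

end Periodic

section MaximumPrinciple

variable {E : Type*} [NormedAddCommGroup E] [InnerProductSpace ℝ E] [FiniteDimensional ℝ E]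
  {f : E → ℝ} {s : Set E}

theorem nonpos_of_periodic_of_laplacian_pos (hf : ContDiff ℝ 2 f)
    (hs : Submodule.span ℝ s = ⊤) (hper : ∀ v ∈ s, Function.Periodic f v)
    (hpos : ∀ x, 0 < f x → 0 < Δ f x) (x : E) : f x ≤ 0 := by
  obtain ⟨y, hy⟩ := exists_forall_le_of_periodic_of_span_eq_top hf.continuous hs hper
  have hlap : Δ f y ≤ 0 := laplacian_nonpos_of_isLocalMax hf.contDiffAt (.of_forall hy)
  exact (hy x).trans (not_lt.mp fun hfy ↦ (hpos y hfy).not_ge hlap)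

theorem eq_zero_of_laplacian_eq_pos_mul_general (hf : ContDiff ℝ 2 f)
    (hs : Submodule.span ℝ s = ⊤) (hper : ∀ v ∈ s, Function.Periodic f v) {A : E → ℝ}
    (hApos : ∀ x, 0 < A x) (heq : ∀ x, Δ f x = A x * f x) (x : E) : f x = 0 := by
  have hle : f x ≤ 0 := nonpos_of_periodic_of_laplacian_pos hf hs hper
    (fun y hy ↦ heq y ▸ mul_pos (hApos y) hy) x
  have hneg (y : E) : Δ (-f) y = A y * (-f) y := by
    rw [InnerProductSpace.laplacian_neg, Pi.neg_apply, Pi.neg_apply, heq, mul_neg]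
  have hge : (-f) x ≤ 0 := nonpos_of_periodic_of_laplacian_pos hf.neg hs
    (fun v hv ↦ (hper v hv).comp Neg.neg) (fun y hy ↦ hneg y ▸ mul_pos (hApos y) hy) x
  exact le_antisymm hle (neg_nonpos.mp hge)

end MaximumPrinciple

theorem laplacian_eq_innerProductSpace_laplacian {n : ℕ} (f : EuclideanSpace ℝ (Fin n) → ℝ) :
    laplacian f = Δ f := by
  rw [InnerProductSpace.laplacian_eq_iteratedFDeriv_orthonormalBasis f
    (EuclideanSpace.basisFun (Fin n) ℝ)]
  simp [funext_iff, laplacian]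

theorem eq_zero_of_laplacian_eq_pos_mul {n : ℕ} (hn : 0 < n)
    (f : EuclideanSpace ℝ (Fin n) → ℝ) (hf : ContDiff ℝ 2 f)
    (hper : ∀ (x : EuclideanSpace ℝ (Fin n)) (i : Fin n),
      f (x + EuclideanSpace.single i (1 : ℝ)) = f x)
    (A : EuclideanSpace ℝ (Fin n) → ℝ) (hA : Continuous A)
    (hApos : ∀ x, 0 < A x)
    (heq : ∀ x, laplacian f x = A x * f x) :
    ∀ x, f x = 0 := by
  simp only [laplacian_eq_innerProductSpace_laplacian] at heq
  exact eq_zero_of_laplacian_eq_pos_mul_general hf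
    (EuclideanSpace.basisFun (Fin n) ℝ).toBasis.span_eq
    (Set.forall_mem_range.mpr fun i x ↦ by simpa using hper x i) hApos heq
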